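/- Suppose A ≠ H and B ≠ H. Then for every m ∈ ℕ: ∑_{x ∈ Δ*, |x|_β = m, η(x) ∈ H} 2·|Δ|^{−|x|−1} ≤ (1 − 4/|Δ|⁴)^{m/2}, where |x| denotes the length of x and |x|_β the number of occurrences of the letters b and b⁻¹ in x. (The weights x ↦ 2·|Δ|^{−|x|−1} form a probability distribution on {x ∈ Δ* : |x|_β = m}.) -/

import Mathlib

open scoped ENNReal

/-- The alphabet `Δ = Σ ⊔ {b, b⁻¹}`: `Sum.inl s` for a letter `s ∈ Σ`, and
`Sum.inr true = b`, `Sum.inr false = b⁻¹`. -/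
abbrev HNNAlph {H : Type*} (S : Finset H) := {x // x ∈ S} ⊕ Bool

/-- Evaluation of a single letter of `Δ` in the HNN extension. -/
def hnnLetter {H : Type*} [Group H] {A B : Subgroup H} (φ : A ≃* B) {S : Finset H} :
    HNNAlph S → HNNExtension H A B φ
  | Sum.inl s => HNNExtension.of s.val
  | Sum.inr true => HNNExtension.t
  | Sum.inr false => HNNExtension.t⁻¹

/-- The evaluation homomorphism `η : Δ* → G` (on words, as lists of letters). -/
def hnnEval {H : Type*} [Group H] {A B : Subgroup H} (φ : A ≃* B) {S : Finset H}
    (w : List (HNNAlph S)) : HNNExtension H A B φ :=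
  (w.map (hnnLetter φ)).prod

/-- The image of the base group `H` inside the HNN extension. -/
def hnnBase {H : Type*} [Group H] {A B : Subgroup H} (φ : A ≃* B) :
    Subgroup (HNNExtension H A B φ) :=
  MonoidHom.range HNNExtension.of

open HNNExtension HNNExtension.NormalWord

section NormalForms

variable {H : Type*} [Group H] {A B : Subgroup H} (φ : A ≃* B) {d : TransversalPair H A B}

theorem length_unitsSMul_of_cancels (u : ℤˣ) (w : NormalWord d) (h : Cancels u w) :
    (unitsSMul φ u w).toList.length + 1 = w.toList.length := by
  simp only [unitsSMul, h, dite_true]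
  induction w using consRecOn with
  | ofGroup => simp [Cancels] at h
  | cons g u' w h1 h2 _ => simp [unitsSMulWithCancel]

theorem length_unitsSMul_of_not_cancels (u : ℤˣ) (w : NormalWord d) (h : ¬ Cancels u w) :
    (unitsSMul φ u w).toList.length = w.toList.length + 1 := by
  simp [unitsSMul, h]

theorem hnnEval_append {S : Finset H} (x y : List (HNNAlph S)) :
    hnnEval φ (x ++ y) = hnnEval φ x * hnnEval φ y := by
  simp [hnnEval]

theorem hnnEval_map_inl {S : Finset H} (y : List {x // x ∈ S}) :
    hnnEval φ (y.map Sum.inl) = HNNExtension.of (y.map Subtype.val).prod := by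
  simp [hnnEval, map_list_prod, Function.comp_def, hnnLetter]

theorem hnnEval_syllable {S : Finset H} (u : Bool) (y : List {x // x ∈ S}) (v : NormalWord d) :
    hnnEval φ (Sum.inr u :: y.map Sum.inl) • v =
      unitsSMul φ (if u then 1 else -1) ((y.map Subtype.val).prod • v) := by
  rw [← List.singleton_append, hnnEval_append, hnnEval_map_inl, mul_smul, of_smul_eq_smul,
    ← t_pow_smul_eq_unitsSMul]
  cases u <;> simp [hnnEval, hnnLetter]

theorem toList_smul_empty_of_mem_hnnBase {g : HNNExtension H A B φ} (hg : g ∈ hnnBase φ) :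
    (g • (NormalWord.empty : NormalWord d)).toList = [] := by
  obtain ⟨h, rfl⟩ := hg
  simp [of_smul_eq_smul]

end NormalForms

section Words

variable {α β : Type*}

theorem exists_map_inl_of_countP_isRight_eq_zero {x : List (α ⊕ β)}
    (h : x.countP (fun c => c.isRight) = 0) : ∃ y : List α, x = y.map Sum.inl := by
  induction x with
  | nil => exact ⟨[], rfl⟩
  | cons a x ih =>
    cases a with
    | inl a =>
      obtain ⟨y, rfl⟩ := ih (by simpa using h)
      exact ⟨a :: y, rfl⟩
    | inr b => simp at h

theorem exists_last_syllable {m : ℕ} {x : List (α ⊕ β)}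
    (h : x.countP (fun c => c.isRight) = m + 1) :
    ∃ (x' : List (α ⊕ β)) (u : β) (y : List α),
      x'.countP (fun c => c.isRight) = m ∧ x = x' ++ Sum.inr u :: y.map Sum.inl := by
  induction x using List.reverseRecOn with
  | nil => simp at h
  | append_singleton x a ih =>
    cases a with
    | inl a =>
      obtain ⟨x', u, y, hx', rfl⟩ := ih (by simpa using h)
      exact ⟨x', u, y ++ [a], hx', by simp⟩
    | inr b => exact ⟨x, b, [], by simpa using h, by simp⟩

theorem tsum_pow_length [Fintype α] (r : ℝ≥0∞) :
    ∑' y : List α, r ^ y.length = (1 - Fintype.card α * r)⁻¹ := by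
  rw [← (Equiv.sigmaFiberEquiv (List.length (α := α))).tsum_eq, ENNReal.tsum_sigma',
    ← ENNReal.tsum_geometric]
  refine tsum_congr fun k => ?_
  have : ∀ y : {y : List α // y.length = k},
      r ^ ((Equiv.sigmaFiberEquiv (List.length (α := α))) ⟨k, y⟩).length = r ^ k := by
    intro y
    simp [Equiv.sigmaFiberEquiv, y.2]
  rw [tsum_congr this]
  change ∑' _ : List.Vector α k, r ^ k = _
  rw [tsum_fintype]
  simp [card_vector, mul_pow]

theorem tsum_pow_length_le {n : ℕ} (hn : n ≠ 0) [Fintype α] (h : Fintype.card α + 2 = n) :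
    ∑' y : List α, (n : ℝ≥0∞)⁻¹ ^ y.length ≤ n / 2 := by
  rw [tsum_pow_length, ENNReal.inv_le_iff_inv_le, ENNReal.inv_div (by simp) (by simp)]
  have hn0 : (n : ℝ≥0∞) ≠ 0 := by simpa
  refine ENNReal.le_sub_of_add_le_right (by finiteness) ?_
  rw [div_eq_mul_inv, ← add_mul, add_comm]
  apply le_of_eq
  rw [← ENNReal.mul_inv_cancel hn0 (by simp), ← h]
  push_cast
  rfl

end Words

section Inequalities

/-- A step of the drifted walk away from the origin contracts the potential `l ^ distance`. -/
theorem contraction_bound {n l c : NNReal} {a b T : ℝ≥0∞} (hn : n ≠ 0)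
    (hl : l ^ 2 * (n + 2) = n) (hc : c * (n + 1) = (n + 2) * l)
    (hT : T ≤ n / 2) (hab : a + b = T) (h : a ≤ n * b) :
    (n : ℝ≥0∞)⁻¹ * (a + l ^ 2 * b + l ^ 2 * T) ≤ c * l := by
  have hTfin : T ≠ ⊤ := ne_top_of_le_ne_top (by finiteness) hT
  subst hab
  obtain ⟨ha, hb⟩ := ENNReal.add_ne_top.1 hTfin
  lift a to NNReal using ha
  lift b to NNReal using hb
  rw [ENNReal.inv_mul_le_iff (by simpa) (by simp)]
  rw [ENNReal.le_div_iff_mul_le (by simp) (by simp)] at hT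
  norm_cast at *
  rw [← NNReal.coe_le_coe] at *
  rw [← NNReal.coe_inj] at hl hc
  push_cast at *
  have hn0 : (0 : ℝ) < n := by positivity
  generalize (n : ℝ) = n, (l : ℝ) = l, (c : ℝ) = c, (a : ℝ) = a, (b : ℝ) = b at *
  have hL : l ^ 2 = n / (n + 2) := by field_simp; linarith
  have hcl : c * l = n / (n + 1) := by
    field_simp
    linear_combination l * hc + hl
  rw [hcl, hL]
  have h1 : a * (n + 1) ≤ n * (a + b) := by linarith
  have h2 : a * (n + 1) * 2 ≤ n * n := by nlinarith
  have e : a + n / (n + 2) * b + n / (n + 2) * (a + b) =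
    (2 * a + 2 * n * (a + b)) / (n + 2) := by field_simp; ring
  rw [e, div_le_iff₀ (by positivity), ← mul_div_assoc, div_mul_eq_mul_div,
    le_div_iff₀ (by positivity)]
  nlinarith

theorem sq_le_of_walk_parameters {n l c : NNReal} (hn : 3 ≤ n)
    (hl : l ^ 2 * (n + 2) = n) (hc : c * (n + 1) = (n + 2) * l) :
    (c : ℝ≥0∞) ^ 2 ≤ 1 - 4 / (n : ℝ≥0∞) ^ 4 := by
  have hn0 : n ≠ 0 := (lt_of_lt_of_le (by norm_num) hn).ne'
  refine ENNReal.le_sub_of_add_le_right (by finiteness) ?_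
  have key : c ^ 2 + 4 / n ^ 4 ≤ 1 := by
    rw [← NNReal.coe_le_coe] at *
    rw [← NNReal.coe_inj] at hl hc
    push_cast at *
    generalize (n : ℝ) = n, (l : ℝ) = l, (c : ℝ) = c at *
    have hcsq : c ^ 2 = 1 - 1 / (n + 1) ^ 2 := by
      field_simp
      linear_combination (c * (n + 1) + (n + 2) * l) * hc + (n + 2) * hl
    have : 4 / n ^ 4 ≤ 1 / (n + 1) ^ 2 := by
      rw [div_le_div_iff₀ (by positivity) (by positivity)]
      nlinarith [mul_self_le_mul_self (by positivity : 0 ≤ 2 * (n + 1))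
        (by nlinarith : 2 * (n + 1) ≤ n ^ 2)]
    linarith
  have h4 : (4 / (n : ℝ≥0∞) ^ 4) = ((4 / n ^ 4 : NNReal) : ℝ≥0∞) := by
    rw [ENNReal.coe_div (by positivity)]
    push_cast
    rfl
  rw [h4]
  exact_mod_cast key

end Inequalities

section Walk

variable {H : Type*} [Group H] {S : Finset H}

theorem exists_mem_notMem_of_ne_top (hgen : Subgroup.closure (S : Set H) = ⊤)
    {C : Subgroup H} (hC : C ≠ ⊤) : ∃ s ∈ S, s ∉ C := by
  by_contra! h
  exact hC (top_le_iff.1 (hgen ▸ (Subgroup.closure_le C).2 h))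

open Classical in
/-- Prepending a generator outside `C` moves a word out of a fixed right coset of `C`. -/
theorem tsum_mem_le_tsum_notMem (hgen : Subgroup.closure (S : Set H) = ⊤)
    {C : Subgroup H} (hC : C ≠ ⊤) (g : H) (r : ℝ≥0∞) :
    r * ∑' y : List {x // x ∈ S},
        (if (y.map Subtype.val).prod * g ∈ C then r ^ y.length else 0) ≤
      ∑' y : List {x // x ∈ S},
        (if (y.map Subtype.val).prod * g ∈ C then 0 else r ^ y.length) := by
  obtain ⟨s, hs, hsC⟩ := exists_mem_notMem_of_ne_top hgen hC
  rw [← ENNReal.tsum_mul_left]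
  refine le_trans (ENNReal.tsum_le_tsum fun y => ?_)
    (ENNReal.tsum_comp_le_tsum_of_injective (List.cons_injective (a := ⟨s, hs⟩)) _)
  split_ifs with h1 h2
  · rw [List.map_cons, List.prod_cons, mul_assoc] at h2
    exact absurd ((C.mul_mem_cancel_right h1).1 h2) hsC
  · simp [pow_succ']
  all_goals simp

variable {A B : Subgroup H} (φ : A ≃* B) {d : TransversalPair H A B}

theorem tsum_unitsSMul_of_head_ne (v : NormalWord d) (u : ℤˣ)
    (hu : v.toList.head?.map Prod.fst ≠ some (-u)) (r l : ℝ≥0∞) :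
    ∑' y : List {x // x ∈ S}, r ^ y.length *
        l ^ (unitsSMul φ u ((y.map Subtype.val).prod • v)).toList.length =
      (∑' y : List {x // x ∈ S}, r ^ y.length) * l ^ (v.toList.length + 1) := by
  rw [← ENNReal.tsum_mul_right]
  refine tsum_congr fun y => ?_
  rw [length_unitsSMul_of_not_cancels _ _ _ (fun h => hu (by simpa using h.2)),
    group_smul_toList]

open Classical in
theorem tsum_unitsSMul_of_head_eq (v : NormalWord d) (u : ℤˣ) {k : ℕ}
    (hk : v.toList.length = k + 1)
    (hu : v.toList.head?.map Prod.fst = some (-u)) (r l : ℝ≥0∞) :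
    ∑' y : List {x // x ∈ S}, r ^ y.length *
        l ^ (unitsSMul φ u ((y.map Subtype.val).prod • v)).toList.length =
      l ^ k * (∑' y : List {x // x ∈ S},
          (if (y.map Subtype.val).prod * v.head ∈ toSubgroup A B u then r ^ y.length else 0) +
        l ^ 2 * ∑' y : List {x // x ∈ S},
          (if (y.map Subtype.val).prod * v.head ∈ toSubgroup A B u then 0 else r ^ y.length)) := by
  rw [← ENNReal.tsum_mul_left, ← ENNReal.tsum_add, ← ENNReal.tsum_mul_left]
  refine tsum_congr fun y => ?_
  have hcan : Cancels u ((y.map Subtype.val).prod • v) ↔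
      (y.map Subtype.val).prod * v.head ∈ toSubgroup A B u := by
    simp [Cancels, hu]
  split_ifs with h
  · have := length_unitsSMul_of_cancels φ _ _ (hcan.2 h)
    rw [group_smul_toList, hk] at this
    rw [Nat.add_right_cancel this]
    ring
  · rw [length_unitsSMul_of_not_cancels φ _ _ (mt hcan.1 h), group_smul_toList, hk]
    ring

theorem tsum_syllable_le (hgen : Subgroup.closure (S : Set H) = ⊤) (hA : A ≠ ⊤) (hB : B ≠ ⊤)
    {n l c : NNReal} (hn : (S.card + 2 : NNReal) = n)
    (hl : l ^ 2 * (n + 2) = n) (hc : c * (n + 1) = (n + 2) * l) (v : NormalWord d) :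
    ∑' (u : Bool) (y : List {x // x ∈ S}), (n : ℝ≥0∞)⁻¹ ^ (y.length + 1) *
        (l : ℝ≥0∞) ^ (hnnEval φ (Sum.inr u :: y.map Sum.inl) • v).toList.length ≤
      c * l ^ v.toList.length := by
  classical
  have hn0 : n ≠ 0 := by rw [← hn]; positivity
  set r : ℝ≥0∞ := (n : ℝ≥0∞)⁻¹ with hr
  set T := ∑' y : List {x // x ∈ S}, r ^ y.length with hTdef
  have hT : T ≤ n / 2 := by
    have := tsum_pow_length_le (α := {x // x ∈ S}) (n := S.card + 2) (by simp) (by simp)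
    rw [hTdef, hr, ← hn]
    simpa using this
  set D : ℤˣ → ℝ≥0∞ := fun u => ∑' y : List {x // x ∈ S}, r ^ y.length *
        (l : ℝ≥0∞) ^ (unitsSMul φ u ((y.map Subtype.val).prod • v)).toList.length with hD
  have hsum : ∑' (u : Bool) (y : List {x // x ∈ S}), r ^ (y.length + 1) *
        (l : ℝ≥0∞) ^ (hnnEval φ (Sum.inr u :: y.map Sum.inl) • v).toList.length =
      r * (D 1 + D (-1)) := by
    simp only [hnnEval_syllable, pow_succ', mul_assoc, ENNReal.tsum_mul_left]
    rw [tsum_fintype, Fintype.sum_bool]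
    simp [hD]
  rw [hsum]
  rcases hk : v.toList.length with _ | k
  · have hnil := List.length_eq_zero_iff.1 hk
    simp only [hD]
    rw [tsum_unitsSMul_of_head_ne φ v 1 (by simp [hnil]),
      tsum_unitsSMul_of_head_ne φ v (-1) (by simp [hnil]), hk]
    have hlc : l ≤ c := by
      have : c = l + l / (n + 1) := by
        field_simp
        rw [hc]; ring
      rw [this]
      exact le_self_add
    calc r * (T * l ^ (0 + 1) + T * l ^ (0 + 1))
        ≤ r * ((n / 2) * l ^ (0 + 1) + (n / 2) * l ^ (0 + 1)) := by gcongr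
      _ = r * n * l := by rw [← add_mul, ENNReal.add_halves]; ring
      _ = l := by rw [hr, ENNReal.inv_mul_cancel (by simpa) (by simp), one_mul]
      _ ≤ c * l ^ 0 := by simpa using hlc
  · obtain ⟨u, hu⟩ : ∃ u, v.toList.head?.map Prod.fst = some (-u) := by
      cases hv : v.toList with
      | nil => simp [hv] at hk
      | cons p L => exact ⟨-p.1, by simp⟩
    have hDD : D 1 + D (-1) = D u + D (-u) := by
      rcases Int.units_eq_one_or u with rfl | rfl
      · rfl
      · rw [neg_neg, add_comm]
    have hC : toSubgroup A B u ≠ ⊤ := by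
      rcases Int.units_eq_one_or u with rfl | rfl <;> simpa
    rw [hDD]
    simp only [hD]
    rw [tsum_unitsSMul_of_head_eq φ v u hk hu, tsum_unitsSMul_of_head_ne φ v (-u)
      (by rw [hu]; rcases Int.units_eq_one_or u with rfl | rfl <;> decide), hk]
    have key := tsum_mem_le_tsum_notMem hgen hC v.head r
    rw [hr, ENNReal.inv_mul_le_iff (by simpa) (by simp), ← hr] at key
    set a := ∑' y : List {x // x ∈ S},
      (if (y.map Subtype.val).prod * v.head ∈ toSubgroup A B u then r ^ y.length else 0)
    set b := ∑' y : List {x // x ∈ S},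
      (if (y.map Subtype.val).prod * v.head ∈ toSubgroup A B u then 0 else r ^ y.length)
    have hab : a + b = T := by
      rw [← ENNReal.tsum_add]
      refine tsum_congr fun y => ?_
      split_ifs <;> simp
    calc _ = l ^ k * (r * (a + l ^ 2 * b + l ^ 2 * T)) := by ring
      _ ≤ l ^ k * (c * l) := mul_le_mul' le_rfl (contraction_bound hn0 hl hc hT hab key)
      _ = _ := by ring

theorem tsum_word_le (hgen : Subgroup.closure (S : Set H) = ⊤) (hA : A ≠ ⊤) (hB : B ≠ ⊤)
    {n l c : NNReal} (hn : (S.card + 2 : NNReal) = n)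
    (hl : l ^ 2 * (n + 2) = n) (hc : c * (n + 1) = (n + 2) * l) (m : ℕ) (v : NormalWord d) :
    ∑' x : {x : List (HNNAlph S) // x.countP (fun c => c.isRight) = m},
        (n : ℝ≥0∞)⁻¹ ^ x.val.length * (l : ℝ≥0∞) ^ (hnnEval φ x.val • v).toList.length ≤
      n / 2 * c ^ m * l ^ v.toList.length := by
  induction m generalizing v with
  | zero =>
    let f : List {x // x ∈ S} →
        {x : List (HNNAlph S) // x.countP (fun c => c.isRight) = 0} :=
      fun y => ⟨y.map Sum.inl, by simp [List.countP_eq_zero]⟩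
    have hf : Function.Surjective f := by
      rintro ⟨x, hx⟩
      obtain ⟨y, rfl⟩ := exists_map_inl_of_countP_isRight_eq_zero hx
      exact ⟨y, rfl⟩
    refine (ENNReal.tsum_le_tsum_comp_of_surjective hf _).trans ?_
    simp only [f, hnnEval_map_inl, of_smul_eq_smul, group_smul_toList, List.length_map,
      ENNReal.tsum_mul_right, pow_zero, mul_one]
    gcongr
    have := tsum_pow_length_le (α := {x // x ∈ S}) (n := S.card + 2) (by simp) (by simp)
    rw [← hn]
    simpa using this
  | succ m ih =>
    let f : (Bool × List {x // x ∈ S}) ×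
        {x : List (HNNAlph S) // x.countP (fun c => c.isRight) = m} →
        {x : List (HNNAlph S) // x.countP (fun c => c.isRight) = m + 1} :=
      fun p => ⟨p.2.val ++ Sum.inr p.1.1 :: p.1.2.map Sum.inl, by
        have : (p.1.2.map (Sum.inl (β := Bool))).countP (fun c => c.isRight) = 0 := by
          simp [List.countP_eq_zero]
        rw [List.countP_append, List.countP_cons_of_pos rfl, p.2.2, this]⟩
    have hf : Function.Surjective f := by
      rintro ⟨x, hx⟩
      obtain ⟨x', u, y, hx', rfl⟩ := exists_last_syllable hx
      exact ⟨⟨⟨u, y⟩, ⟨x', hx'⟩⟩, rfl⟩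
    refine (ENNReal.tsum_le_tsum_comp_of_surjective hf _).trans ?_
    rw [ENNReal.tsum_prod', ENNReal.tsum_prod']
    calc _ = ∑' (u : Bool) (y : List {x // x ∈ S}), (n : ℝ≥0∞)⁻¹ ^ (y.length + 1) *
          ∑' x : {x : List (HNNAlph S) // x.countP (fun c => c.isRight) = m},
            (n : ℝ≥0∞)⁻¹ ^ x.val.length * (l : ℝ≥0∞) ^ (hnnEval φ x.val •
              (hnnEval φ (Sum.inr u :: y.map Sum.inl) • v)).toList.length := by
          refine tsum_congr fun u => tsum_congr fun y => ?_
          rw [← ENNReal.tsum_mul_left]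
          refine tsum_congr fun x => ?_
          simp only [f, hnnEval_append, mul_smul, List.length_append, List.length_cons,
            List.length_map, pow_add]
          ring
      _ ≤ ∑' (u : Bool) (y : List {x // x ∈ S}), (n : ℝ≥0∞)⁻¹ ^ (y.length + 1) *
          (n / 2 * c ^ m *
            l ^ (hnnEval φ (Sum.inr u :: y.map Sum.inl) • v).toList.length) := by
          gcongr with u y
          exact ih _
      _ = n / 2 * c ^ m * ∑' (u : Bool) (y : List {x // x ∈ S}),
          (n : ℝ≥0∞)⁻¹ ^ (y.length + 1) *
            (l : ℝ≥0∞) ^ (hnnEval φ (Sum.inr u :: y.map Sum.inl) • v).toList.length := by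
          simp only [← ENNReal.tsum_mul_left]
          refine tsum_congr fun u => tsum_congr fun y => ?_
          ring
      _ ≤ n / 2 * c ^ m * (c * l ^ v.toList.length) := by
          gcongr
          exact tsum_syllable_le φ hgen hA hB hn hl hc v
      _ = _ := by ring

end Walk

/-- If `A ≠ H ≠ B`, then a random word `x ∈ Δ*` with `|x|_β = m` (with weights
`2·|Δ|^{-|x|-1}`) evaluates into `H` with probability at most `(1 - 4/|Δ|⁴)^{m/2}`. -/
theorem stmt14 {H : Type*} [Group H] (S : Finset H)
    (hsym : ∀ x ∈ S, x⁻¹ ∈ S) (hgen : Subgroup.closure (S : Set H) = ⊤)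
    (A B : Subgroup H) (φ : A ≃* B) (hA : A ≠ ⊤) (hB : B ≠ ⊤) (m : ℕ) :
    ∑' x : {x : List (HNNAlph S) //
        x.countP (fun c => c.isRight) = m ∧ hnnEval φ x ∈ hnnBase φ},
      2 / (S.card + 2 : ℝ≥0∞) ^ (x.val.length + 1)
      ≤ (1 - 4 / (S.card + 2 : ℝ≥0∞) ^ 4) ^ ((m : ℝ) / 2) := by
  obtain ⟨d⟩ := TransversalPair.nonempty H A B
  have hS : 1 ≤ S.card := by
    obtain ⟨s, hs, -⟩ := exists_mem_notMem_of_ne_top hgen hA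
    exact Finset.card_pos.2 ⟨s, hs⟩
  obtain ⟨n, hn⟩ : ∃ n : NNReal, (S.card + 2 : NNReal) = n := ⟨_, rfl⟩
  have hn3 : 3 ≤ n := by
    rw [← hn]
    exact_mod_cast Nat.add_le_add_right hS 2
  have hnE : (S.card + 2 : ℝ≥0∞) = n := by rw [← hn]; push_cast; rfl
  have hn0 : n ≠ 0 := (lt_of_lt_of_le (by norm_num) hn3).ne'
  obtain ⟨l, hl⟩ : ∃ l : NNReal, l ^ 2 * (n + 2) = n :=
    ⟨NNReal.sqrt (n / (n + 2)), by rw [NNReal.sq_sqrt]; field_simp⟩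
  obtain ⟨c, hc⟩ : ∃ c : NNReal, c * (n + 1) = (n + 2) * l :=
    ⟨(n + 2) * l / (n + 1), by field_simp⟩
  have hcsq := sq_le_of_walk_parameters hn3 hl hc
  rw [hnE]
  let f : {x : List (HNNAlph S) //
        x.countP (fun c => c.isRight) = m ∧ hnnEval φ x ∈ hnnBase φ} →
      {x : List (HNNAlph S) // x.countP (fun c => c.isRight) = m} := fun x => ⟨x.1, x.2.1⟩
  have hf : Function.Injective f := fun x y h => Subtype.ext (Subtype.mk.inj h)
  calc _ = 2 * (n : ℝ≥0∞)⁻¹ * ∑' x : {x : List (HNNAlph S) //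
          x.countP (fun c => c.isRight) = m ∧ hnnEval φ x ∈ hnnBase φ},
        (n : ℝ≥0∞)⁻¹ ^ (f x).val.length * (l : ℝ≥0∞) ^
          (hnnEval φ (f x).val • (NormalWord.empty : NormalWord d)).toList.length := by
        rw [← ENNReal.tsum_mul_left]
        refine tsum_congr fun x => ?_
        rw [toList_smul_empty_of_mem_hnnBase φ x.2.2, List.length_nil, pow_zero, mul_one,
          div_eq_mul_inv, ENNReal.inv_pow, pow_succ']
        ring
    _ ≤ 2 * (n : ℝ≥0∞)⁻¹ * (n / 2 * c ^ m * l ^ 0) := by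
        gcongr
        exact (ENNReal.tsum_comp_le_tsum_of_injective hf fun x => (n : ℝ≥0∞)⁻¹ ^ x.val.length *
          (l : ℝ≥0∞) ^ (hnnEval φ x.val • (NormalWord.empty : NormalWord d)).toList.length).trans
          (tsum_word_le φ hgen hA hB hn hl hc m NormalWord.empty)
    _ = (c : ℝ≥0∞) ^ m := by
        have h2 : (2 : ℝ≥0∞) * 2⁻¹ = 1 := ENNReal.mul_inv_cancel (by simp) (by simp)
        have hnn : (n : ℝ≥0∞)⁻¹ * n = 1 := ENNReal.inv_mul_cancel (by simpa) (by simp)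
        rw [div_eq_mul_inv, pow_zero, mul_one]
        calc _ = (2 * 2⁻¹ : ℝ≥0∞) * ((n : ℝ≥0∞)⁻¹ * n) * (c : ℝ≥0∞) ^ m := by ring
          _ = _ := by rw [h2, hnn, one_mul, one_mul]
    _ = ((c : ℝ≥0∞) ^ 2) ^ ((m : ℝ) / 2) := by
        rw [← ENNReal.rpow_natCast, ← ENNReal.rpow_natCast, ← ENNReal.rpow_mul]
        congr 1
        push_cast
        ring
    _ ≤ _ := by gcongr
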